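/- Two-scale Gronwall lemma (abstract form of the paper's Lemma 4.2): Let K > 0, κ ∈ (0,1), and c ∈ (0, 1/K). Let N : [0,∞) → ℝ be nonnegative and integrable and set A = ∫₀^∞ N(s) ds and ε₀ = ((κK/2)·e^{−KA})^{1/(1−cK)}. Let ε satisfy 0 < ε ≤ ε₀ and ε < 1, and set t_ε = c·ε·ln(1/ε). Let r : [0,∞) → ℝ be nonnegative and integrable with R := ∫₀^∞ r(s) ds ≤ (κ/2)·(ε^{1+cK}/K)·e^{−KA}. Let φ : [0, t_ε] → ℝ be continuous and nonnegative with φ(0) = 0, differentiable on (0, t_ε), and assume: for every t ∈ (0, t_ε) such that φ(s) ≤ κ for all s ∈ [0, t], one has ε·φ'(t) ≤ K·((1 + N(t/ε))·φ(t) + t + r(t)). Then sup_{t ∈ [0, t_ε]} φ(t) ≤ (ε^{1−cK}/K + K·R·ε^{−1−cK})·e^{KA}; in particular φ(t) ≤ κ for all t ∈ [0, t_ε]. -/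

import Mathlib

open Set MeasureTheory

lemma aux_exp_int (n : ℝ → ℝ) (hn : Integrable n) (hn0 : ∀ s, 0 ≤ n s) (t : ℝ) (ht : 0 ≤ t) :
    ∫ s in (0:ℝ)..t, n s * Real.exp (∫ x in (0:ℝ)..s, n x) ≤
      Real.exp (∫ x in (0:ℝ)..t, n x) - 1 := by
  have hmono : Monotone (fun s => Real.exp (∫ x in (0:ℝ)..s, n x)) := by
    intro a b hab
    apply Real.exp_le_exp.mpr
    have := intervalIntegral.integral_add_adjacent_intervals
      (hn.intervalIntegrable (a := 0) (b := a)) (hn.intervalIntegrable (a := a) (b := b))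
    have h2 : 0 ≤ ∫ x in a..b, n x := intervalIntegral.integral_nonneg hab (fun x _ => hn0 x)
    linarith
  have h1 := (hmono.monotoneOn (uIcc 0 t)).intervalIntegral_deriv_mem_uIcc
  have h0 : Real.exp (∫ x in (0:ℝ)..0, n x) = 1 := by simp
  have hle : Real.exp (∫ x in (0:ℝ)..0, n x) ≤ Real.exp (∫ x in (0:ℝ)..t, n x) := hmono ht
  have h2 : ∫ s in (0:ℝ)..t, n s * Real.exp (∫ x in (0:ℝ)..s, n x) =
      ∫ s in (0:ℝ)..t, deriv (fun s => Real.exp (∫ x in (0:ℝ)..s, n x)) s := by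
    apply intervalIntegral.integral_congr_ae
    filter_upwards [LocallyIntegrable.ae_hasDerivAt_integral hn.locallyIntegrable] with x hx _
    rw [(hx 0).exp.deriv, mul_comm]
  rw [h2]
  rw [uIcc_of_le (by linarith), h0] at h1
  exact h1.2

lemma aux_gronwall (n u : ℝ → ℝ) (hn : Integrable n) (hn0 : ∀ s, 0 ≤ n s) (B T : ℝ)
    (hB : 0 ≤ B) (hu : ContinuousOn u (Icc 0 T))
    (h : ∀ t ∈ Icc 0 T, u t ≤ B + ∫ s in (0:ℝ)..t, n s * u s) :
    ∀ t ∈ Icc 0 T, u t ≤ B * Real.exp (∫ x in (0:ℝ)..t, n x) := by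
  have hP : Continuous (fun s => Real.exp (∫ x in (0:ℝ)..s, n x)) :=
    Real.continuous_exp.comp (intervalIntegral.continuous_primitive
      (fun a b => hn.intervalIntegrable) 0)
  have key : ∀ δ > 0, ∀ t ∈ Icc 0 T, u t < (B + δ) * Real.exp (∫ x in (0:ℝ)..t, n x) := by
    intro δ hδ
    by_contra! hcon
    obtain ⟨t₀, ht₀, ht₀'⟩ := hcon
    have hcl : IsClosed {t ∈ Icc 0 T | (B + δ) * Real.exp (∫ x in (0:ℝ)..t, n x) ≤ u t} :=
      isClosed_Icc.isClosed_le (continuous_const.mul hP).continuousOn hu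
    have hcomp : IsCompact {t ∈ Icc 0 T | (B + δ) * Real.exp (∫ x in (0:ℝ)..t, n x) ≤ u t} :=
      isCompact_Icc.of_isClosed_subset hcl (fun x hx => hx.1)
    obtain ⟨t₁, ⟨ht₁, ht₁'⟩, hmin⟩ := hcomp.exists_isLeast ⟨t₀, ht₀, ht₀'⟩
    have hsub : Icc 0 t₁ ⊆ Icc 0 T := Icc_subset_Icc_right ht₁.2
    have hint : ∫ s in (0:ℝ)..t₁, n s * u s ≤
        ∫ s in (0:ℝ)..t₁, (B + δ) * (n s * Real.exp (∫ x in (0:ℝ)..s, n x)) := by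
      apply intervalIntegral.integral_mono_on_of_le_Ioo ht₁.1
      · exact hn.intervalIntegrable.mul_continuousOn (by rw [uIcc_of_le ht₁.1]; exact hu.mono hsub)
      · exact (hn.intervalIntegrable.mul_continuousOn hP.continuousOn).const_mul _
      · intro s hs
        have : u s < (B + δ) * Real.exp (∫ x in (0:ℝ)..s, n x) := by
          by_contra! hc
          have := hmin ⟨hsub ⟨hs.1.le, hs.2.le⟩, hc⟩
          linarith [hs.2]
        nlinarith [hn0 s]
    rw [intervalIntegral.integral_const_mul] at hint
    have h3 := aux_exp_int n hn hn0 t₁ ht₁.1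
    have h4 := h t₁ ht₁
    have h5 := mul_le_mul_of_nonneg_left h3 (by linarith : 0 ≤ B + δ)
    linarith
  intro t ht
  by_contra! hc
  have hE := Real.exp_pos (∫ x in (0:ℝ)..t, n x)
  have := key ((u t - B * Real.exp (∫ x in (0:ℝ)..t, n x)) / Real.exp (∫ x in (0:ℝ)..t, n x))
    (div_pos (by linarith) hE) t ht
  rw [add_mul, div_mul_cancel₀ _ hE.ne'] at this
  linarith

lemma aux_core (k L R T : ℝ) (hk : 0 < k) (hT : 0 ≤ T) (M r φ φ' : ℝ → ℝ)
    (hM : Integrable M) (hM0 : ∀ s, 0 ≤ M s) (hL : ∫ s, k * M s ≤ L)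
    (hr : Integrable r) (hr0 : ∀ s, 0 ≤ r s) (hR : ∫ s, r s = R)
    (hφc : ContinuousOn φ (Icc 0 T)) (hφini : φ 0 = 0)
    (hφd : ∀ t ∈ Ioo 0 T, HasDerivAt φ (φ' t) t)
    (hineq : ∀ t ∈ Ioo 0 T, φ' t ≤ k * ((1 + M t) * φ t + t + r t)) :
    φ T ≤ ((Real.exp (k * T) - 1) / k + k * R * Real.exp (k * T)) * Real.exp L := by
  have hle : ∀ f : ℝ → ℝ, Integrable f → (∀ s, 0 ≤ f s) → ∀ t, 0 ≤ t →
      ∫ s in (0:ℝ)..t, f s ≤ ∫ s, f s := by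
    intro f hf hf0 t ht
    rw [intervalIntegral.integral_of_le ht]
    exact setIntegral_le_integral hf (Filter.Eventually.of_forall hf0)
  have hR0 : 0 ≤ R := hR ▸ integral_nonneg hr0
  have hE1 : Real.exp (-(k * T)) ≤ 1 := Real.exp_le_one_iff.mpr (by nlinarith)
  set B := (1 - Real.exp (-(k * T))) / k + k * R with hB
  have hB0 : 0 ≤ B := by
    have : 0 ≤ (1 - Real.exp (-(k * T))) / k := div_nonneg (by linarith) hk.le
    positivity
  set ψ : ℝ → ℝ := fun t => Real.exp (-(k * t)) * φ t with hψ
  have hψc : ContinuousOn ψ (Icc 0 T) := by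
    apply ContinuousOn.mul _ hφc
    fun_prop
  have hkM : Integrable (fun s => k * M s) := hM.const_mul k
  have main := aux_gronwall (fun s => k * M s) ψ hkM
    (fun s => mul_nonneg hk.le (hM0 s)) B T hB0 hψc (by
    intro t ht
    have hsub : Icc 0 t ⊆ Icc 0 T := Icc_subset_Icc_right ht.2
    have i1 : IntervalIntegrable (fun s => k * M s * ψ s) volume 0 t :=
      hkM.intervalIntegrable.mul_continuousOn (by rw [uIcc_of_le ht.1]; exact hψc.mono hsub)
    have i2 : IntervalIntegrable (fun s => k * r s) volume 0 t :=
      (hr.const_mul k).intervalIntegrable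
    have := intervalIntegral.sub_le_integral_of_hasDeriv_right_of_le (a := 0) (b := t)
      (g := fun s => ψ s + (s * Real.exp (-(k * s)) + Real.exp (-(k * s)) / k))
      (g' := fun s => Real.exp (-(k * s)) * (φ' s - k * φ s - k * s))
      (φ := fun s => k * M s * ψ s + k * r s) ht.1
      ((hψc.mono hsub).add (by fun_prop)) (by
        intro s hs
        have hs' : s ∈ Ioo 0 T := ⟨hs.1, hs.2.trans_le ht.2⟩
        have e : HasDerivAt (fun s => Real.exp (-(k * s))) (Real.exp (-(k * s)) * (-(k * 1))) s :=
          ((hasDerivAt_id s).const_mul k).neg.exp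
        have := (e.mul (hφd s hs')).add (((hasDerivAt_id s).mul e).add (e.div_const k))
        refine (this.congr_deriv ?_).hasDerivWithinAt
        simp only [id]
        field_simp
        ring) ((intervalIntegrable_iff_integrableOn_Icc_of_le ht.1).mp (i1.add i2)) (by
        intro s hs
        have hs' : s ∈ Ioo 0 T := ⟨hs.1, hs.2.trans_le ht.2⟩
        have h1 := hineq s hs'
        have e0 := Real.exp_pos (-(k * s))
        have e1 : Real.exp (-(k * s)) ≤ 1 :=
          Real.exp_le_one_iff.mpr (by nlinarith [mul_pos hk hs.1])
        have h2 : φ' s - k * φ s - k * s ≤ k * M s * φ s + k * r s := by linarith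
        have h3 := mul_le_mul_of_nonneg_left h2 e0.le
        have h4 : Real.exp (-(k * s)) * (k * r s) ≤ 1 * (k * r s) :=
          mul_le_mul_of_nonneg_right e1 (mul_nonneg hk.le (hr0 s))
        simp only [hψ]
        linarith)
    rw [intervalIntegral.integral_add i1 i2, intervalIntegral.integral_const_mul k r] at this
    have h5 := mul_le_mul_of_nonneg_left (hle r hr hr0 t ht.1) hk.le
    rw [hR] at h5
    have h6 : ψ 0 = 0 := by simp [hψ, hφini]
    simp only [h6, mul_zero, neg_zero, Real.exp_zero, zero_add, zero_mul] at this
    have h7 : 0 ≤ t * Real.exp (-(k * t)) := mul_nonneg ht.1 (Real.exp_pos _).le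
    have h8 : Real.exp (-(k * T)) / k ≤ Real.exp (-(k * t)) / k := by
      gcongr
      exact ht.2
    rw [hB, sub_div]
    linarith) T ⟨hT, le_rfl⟩
  have h1 : B * Real.exp (∫ x in (0:ℝ)..T, k * M x) ≤ B * Real.exp L := by
    gcongr
    exact (hle _ hkM (fun s => mul_nonneg hk.le (hM0 s)) T hT).trans hL
  have h2 : φ T = Real.exp (k * T) * ψ T := by
    simp only [hψ]
    rw [← mul_assoc, ← Real.exp_add]; simp
  have h3 : Real.exp (k * T) * Real.exp (-(k * T)) = 1 := by
    rw [← Real.exp_add]; simp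
  rw [h2]
  calc Real.exp (k * T) * ψ T ≤ Real.exp (k * T) * (B * Real.exp L) := by
        gcongr; exact main.trans h1
    _ = ((Real.exp (k * T) - Real.exp (k * T) * Real.exp (-(k * T))) / k
          + k * R * Real.exp (k * T)) * Real.exp L := by rw [hB]; ring
    _ = _ := by rw [h3]


/-- Two-scale Gronwall lemma (abstract form of the paper's Lemma 4.2). -/
theorem two_scale_gronwall
    (K κ c : ℝ) (hK : 0 < K) (hκ : κ ∈ Ioo (0:ℝ) 1) (hc : c ∈ Ioo 0 (1 / K))
    (N : ℝ → ℝ) (hN0 : ∀ s, 0 ≤ s → 0 ≤ N s) (hNint : IntegrableOn N (Ici 0))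
    (A : ℝ) (hA : A = ∫ s in Ici (0:ℝ), N s)
    (ε₀ : ℝ) (hε₀ : ε₀ = ((κ * K / 2) * Real.exp (-K * A)) ^ (1 / (1 - c * K)))
    (ε : ℝ) (hε : 0 < ε) (hεε₀ : ε ≤ ε₀) (hε1 : ε < 1)
    (tε : ℝ) (htε : tε = c * ε * Real.log (1 / ε))
    (r : ℝ → ℝ) (hr0 : ∀ s, 0 ≤ s → 0 ≤ r s) (hrint : IntegrableOn r (Ici 0))
    (R : ℝ) (hR : R = ∫ s in Ici (0:ℝ), r s)
    (hRsmall : R ≤ (κ / 2) * (ε ^ (1 + c * K) / K) * Real.exp (-K * A))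
    (φ φ' : ℝ → ℝ)
    (hφc : ContinuousOn φ (Icc 0 tε))
    (hφ0 : ∀ t ∈ Icc 0 tε, 0 ≤ φ t)
    (hφini : φ 0 = 0)
    (hφd : ∀ t ∈ Ioo 0 tε, HasDerivAt φ (φ' t) t)
    (hineq : ∀ t ∈ Ioo 0 tε, (∀ s ∈ Icc 0 t, φ s ≤ κ) →
      ε * φ' t ≤ K * ((1 + N (t / ε)) * φ t + t + r t)) :
    (∀ t ∈ Icc 0 tε,
        φ t ≤ (ε ^ (1 - c * K) / K + K * R * ε ^ (-1 - c * K)) * Real.exp (K * A))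
      ∧ (∀ t ∈ Icc 0 tε, φ t ≤ κ) := by

  obtain ⟨hκ0, hκ1⟩ := hκ
  obtain ⟨hc0, hc1⟩ := hc
  have hcK : c * K < 1 := by rwa [lt_div_iff₀ hK] at hc1
  have hk : 0 < K / ε := div_pos hK hε
  have htpos : 0 ≤ tε := by
    rw [htε]
    have : 0 ≤ Real.log (1 / ε) := Real.log_nonneg (by rw [le_div_iff₀ hε]; linarith)
    positivity
  have hR0 : 0 ≤ R := hR ▸ setIntegral_nonneg measurableSet_Ici hr0
  -- exponential at tε
  have hexp : Real.exp (K / ε * tε) = ε ^ (-(c * K)) := by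
    rw [Real.rpow_def_of_pos hε, htε, one_div, Real.log_inv]
    congr 1
    field_simp
  have hM1 : Integrable (indicator (Ici 0) N) := (integrable_indicator_iff measurableSet_Ici).mpr hNint
  have hr1 : Integrable (indicator (Ici 0) r) := (integrable_indicator_iff measurableSet_Ici).mpr hrint
  have core : ∀ T ∈ Icc 0 tε, (∀ s ∈ Icc 0 T, φ s ≤ κ) →
      φ T ≤ ((Real.exp (K / ε * T) - 1) / (K / ε) + K / ε * R * Real.exp (K / ε * T))
        * Real.exp (K * A) := by
    intro T hT hs
    apply aux_core (K / ε) (K * A) R T hk hT.1 (fun s => indicator (Ici 0) N (s / ε))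
      (indicator (Ici 0) r) φ φ' (hM1.comp_div hε.ne')
      (fun s => indicator_nonneg hN0 _)
    · apply le_of_eq
      rw [integral_const_mul, Measure.integral_comp_div, integral_indicator measurableSet_Ici, ← hA,
        abs_of_pos hε, smul_eq_mul]
      field_simp
    · exact hr1
    · exact fun s => indicator_nonneg hr0 _
    · rw [integral_indicator measurableSet_Ici, hR]
    · exact hφc.mono (Icc_subset_Icc_right hT.2)
    · exact hφini
    · exact fun t ht => hφd t ⟨ht.1, ht.2.trans_le hT.2⟩
    · intro t ht
      have h1 := hineq t ⟨ht.1, ht.2.trans_le hT.2⟩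
        (fun s hs' => hs s ⟨hs'.1, hs'.2.trans ht.2.le⟩)
      have e1 : t / ε ∈ Ici (0:ℝ) := (div_pos ht.1 hε).le
      have e2 : t ∈ Ici (0:ℝ) := ht.1.le
      rw [indicator_of_mem e1, indicator_of_mem e2, div_mul_eq_mul_div, le_div_iff₀ hε]
      linarith
  have bound : ∀ T ∈ Icc 0 tε,
      ((Real.exp (K / ε * T) - 1) / (K / ε) + K / ε * R * Real.exp (K / ε * T))
        * Real.exp (K * A) <
      (ε ^ (1 - c * K) / K + K * R * ε ^ (-1 - c * K)) * Real.exp (K * A) := by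
    intro T hT
    have h1 : Real.exp (K / ε * T) ≤ ε ^ (-(c * K)) := by
      rw [← hexp]; gcongr; exact hT.2
    have h2 : ε ^ (1 - c * K) = ε * ε ^ (-(c * K)) := by
      rw [sub_eq_add_neg, Real.rpow_add hε, Real.rpow_one]
    have h3 : ε ^ (-1 - c * K) = ε⁻¹ * ε ^ (-(c * K)) := by
      rw [sub_eq_add_neg, Real.rpow_add hε, Real.rpow_neg_one]
    apply mul_lt_mul_of_pos_right _ (Real.exp_pos _)
    apply add_lt_add_of_lt_of_le
    · rw [h2, mul_div_right_comm, ← inv_div K ε, inv_mul_eq_div]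
      exact div_lt_div_of_pos_right (by linarith) hk
    · rw [h3]
      calc K / ε * R * Real.exp (K / ε * T) ≤ K / ε * R * ε ^ (-(c * K)) := by gcongr
        _ = _ := by ring
  have final : (ε ^ (1 - c * K) / K + K * R * ε ^ (-1 - c * K)) * Real.exp (K * A) ≤ κ := by
    have hx : 0 < 1 - c * K := by linarith
    have h1 : ε ^ (1 - c * K) ≤ κ * K / 2 * Real.exp (-K * A) := by
      calc ε ^ (1 - c * K) ≤ ε₀ ^ (1 - c * K) := by gcongr
        _ = _ := by
          rw [hε₀, ← Real.rpow_mul (by positivity), one_div_mul_cancel hx.ne', Real.rpow_one]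
    have e : Real.exp (-K * A) * Real.exp (K * A) = 1 := by
      rw [← Real.exp_add]; simp
    have h2 : ε ^ (1 + c * K) * ε ^ (-1 - c * K) = 1 := by
      rw [← Real.rpow_add hε]; ring_nf; simp
    have hp : 0 < ε ^ (-1 - c * K) := Real.rpow_pos_of_pos hε _
    calc _ ≤ ((κ * K / 2 * Real.exp (-K * A)) / K +
          K * ((κ / 2) * (ε ^ (1 + c * K) / K) * Real.exp (-K * A)) * ε ^ (-1 - c * K))
            * Real.exp (K * A) := by gcongr
      _ = (κ / 2 + κ / 2 * (ε ^ (1 + c * K) * ε ^ (-1 - c * K)))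
            * (Real.exp (-K * A) * Real.exp (K * A)) := by field_simp
      _ = κ := by rw [e, h2]; ring
  have hκall : ∀ t ∈ Icc 0 tε, φ t ≤ κ := by
    by_contra! hcon
    obtain ⟨t₀, ht₀, ht₀'⟩ := hcon
    have hcl : IsClosed {t ∈ Icc 0 tε | κ ≤ φ t} :=
      isClosed_Icc.isClosed_le continuousOn_const hφc
    have hcomp : IsCompact {t ∈ Icc 0 tε | κ ≤ φ t} :=
      isCompact_Icc.of_isClosed_subset hcl (fun x hx => hx.1)
    obtain ⟨t₁, ⟨ht₁, ht₁'⟩, hmin⟩ := hcomp.exists_isLeast ⟨t₀, ht₀, ht₀'.le⟩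
    have hlt : ∀ s ∈ Ico 0 t₁, φ s ≤ κ := by
      intro s hs
      by_contra! hc
      have := hmin ⟨⟨hs.1, hs.2.le.trans ht₁.2⟩, hc.le⟩
      linarith [hs.2]
    have ht₁pos : 0 < t₁ := by
      rcases ht₁.1.eq_or_lt with h | h
      · rw [← h, hφini] at ht₁'; linarith
      · exact h
    have hle : ∀ s ∈ Icc 0 t₁, φ s ≤ κ := by
      have hc' : ContinuousOn φ (closure (Ico 0 t₁)) := by
        rw [closure_Ico ht₁pos.ne]
        exact hφc.mono (Icc_subset_Icc_right ht₁.2)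
      intro s hs
      exact le_on_closure hlt hc' continuousOn_const (by rwa [closure_Ico ht₁pos.ne])
    have := core t₁ ht₁ hle
    have := bound t₁ ht₁
    linarith
  refine ⟨fun t ht => ?_, hκall⟩
  exact ((core t ht (fun s hs => hκall s ⟨hs.1, hs.2.trans ht.2⟩)).trans_lt (bound t ht)).le
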